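/- Let G be a connected undirected graph on n vertices (with self-loops at every vertex), let ρ > 0, and for each k ≥ 1 let B_k be an n×n doubly stochastic matrix such that B_k[i,j] ≥ ρ whenever j is a neighbor of i (including j = i) and B_k[i,j] = 0 otherwise. Define the transition matrices Φ(k,s) = B_k B_{k−1} ⋯ B_s for k ≥ s ≥ 1. Then (i) lim_{k→∞} Φ(k,s) = (1/n) 𝟙𝟙ᵀ for all s ≥ 1, and (ii) |Φ(k,s)[i,j] − 1/n| ≤ θ β^{k−s+1} for all k ≥ s ≥ 1 and all i, j, where θ = (1 − ρ/(4n²))^{−2} and β = 1 − ρ/(4n²). -/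

import Mathlib

lemma walk_bound {n : ℕ} (G : SimpleGraph (Fin n)) (x g : Fin n → ℝ) (hg : ∀ i, 0 ≤ g i)
    (h : ∀ i j, G.Adj i j → |x i - x j| ≤ g i) {u v : Fin n} (p : G.Walk u v) :
    |x u - x v| ≤ (p.support.map g).sum := by
  induction p with
  | nil => simpa using hg _
  | @cons a b c hab p ih =>
    have h1 := h a b hab
    have h2 := abs_sub_le (x a) (x b) (x c)
    simp only [SimpleGraph.Walk.support_cons, List.map_cons, List.sum_cons]
    linarith

lemma conn_bound {n : ℕ} (G : SimpleGraph (Fin n)) (hG : G.Connected) (x g : Fin n → ℝ)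
    (hg : ∀ i, 0 ≤ g i) (h : ∀ i j, G.Adj i j → |x i - x j| ≤ g i) (u v : Fin n) :
    |x u - x v| ≤ ∑ i, g i := by
  classical
  obtain ⟨p, hp⟩ := (hG.preconnected u v).exists_isPath
  refine (walk_bound G x g hg h p).trans ?_
  rw [← List.sum_toFinset g hp.support_nodup]
  exact Finset.sum_le_sum_of_subset_of_nonneg (Finset.subset_univ _) (fun i _ _ => hg i)

lemma step_bound {n : ℕ} (hn : 1 ≤ n)
    (G : SimpleGraph (Fin n)) (hG : G.Connected)
    (ρ : ℝ) (hρ : 0 < ρ)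
    (B : Matrix (Fin n) (Fin n) ℝ)
    (hBpos : ∀ i j, (G.Adj i j ∨ i = j) → ρ ≤ B i j)
    (hBnn : ∀ i j, 0 ≤ B i j)
    (hBrow : ∀ i, ∑ j, B i j = 1)
    (hBcol : ∀ j, ∑ i, B i j = 1) (z : Fin n → ℝ) (hz : ∑ i, z i = 0) :
    ∑ i, (∑ j, B i j * z j) ^ 2 ≤ (1 - ρ / (4 * (n : ℝ) ^ 2)) ^ 2 * ∑ i, z i ^ 2 := by
  have hn0 : (0 : ℝ) < n := by exact_mod_cast hn
  set y : Fin n → ℝ := fun i => ∑ j, B i j * z j with hy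
  set W : Fin n → ℝ := fun i => ∑ j, B i j * (z j - y i) ^ 2 with hW
  have hWi : ∀ i, W i = ∑ j, B i j * z j ^ 2 - y i ^ 2 := by
    intro i
    have : W i = ∑ j, B i j * z j ^ 2 - 2 * y i * (∑ j, B i j * z j) + y i ^ 2 * ∑ j, B i j := by
      simp only [hW, Finset.mul_sum]
      rw [← Finset.sum_sub_distrib, ← Finset.sum_add_distrib]
      exact Finset.sum_congr rfl fun j _ => by ring
    rw [this, hBrow]
    change _ - 2 * y i * y i + _ = _
    ring
  have hWs : ∑ i, W i = ∑ i, z i ^ 2 - ∑ i, y i ^ 2 := by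
    simp only [hWi, Finset.sum_sub_distrib]
    rw [Finset.sum_comm]
    simp only [← Finset.sum_mul, hBcol, one_mul]
  have hW0 : ∀ i, 0 ≤ W i := fun i =>
    Finset.sum_nonneg fun j _ => mul_nonneg (hBnn i j) (sq_nonneg _)
  set g : Fin n → ℝ := fun i => Real.sqrt (2 / ρ * W i) with hgdef
  have hg2 : ∀ i, g i ^ 2 = 2 / ρ * W i := fun i =>
    Real.sq_sqrt (mul_nonneg (by positivity) (hW0 i))
  have hadj : ∀ i j, G.Adj i j → |z i - z j| ≤ g i := by
    intro i j hij
    apply Real.abs_le_sqrt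
    have hne : i ≠ j := hij.ne
    have h1 : B i i * (z i - y i) ^ 2 + B i j * (z j - y i) ^ 2 ≤ W i := by
      rw [← Finset.sum_pair (f := fun j => B i j * (z j - y i) ^ 2) hne]
      exact Finset.sum_le_sum_of_subset_of_nonneg (Finset.subset_univ _)
        (fun j _ _ => mul_nonneg (hBnn i j) (sq_nonneg _))
    have h2 := mul_le_mul_of_nonneg_right (hBpos i i (Or.inr rfl)) (sq_nonneg (z i - y i))
    have h3 := mul_le_mul_of_nonneg_right (hBpos i j (Or.inl hij)) (sq_nonneg (z j - y i))
    rw [div_mul_eq_mul_div, le_div_iff₀ hρ]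
    nlinarith [mul_nonneg hρ.le (sq_nonneg ((z i - y i) + (z j - y i)))]
  have hS := conn_bound G hG z g (fun i => Real.sqrt_nonneg _) hadj
  set S := ∑ i, g i with hSdef
  have hS2 : S ^ 2 ≤ n * (2 / ρ * ∑ i, W i) := by
    have := sq_sum_le_card_mul_sum_sq (s := (Finset.univ : Finset (Fin n))) (f := g)
    simpa [hg2, ← Finset.mul_sum] using this
  have hzi : ∀ i, z i ^ 2 ≤ S ^ 2 := by
    intro i
    apply sq_le_sq'  <;>
    · have h1 : |∑ j, (z i - z j)| ≤ ∑ j : Fin n, S :=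
        (Finset.abs_sum_le_sum_abs _ _).trans (Finset.sum_le_sum fun j _ => hS i j)
      rw [Finset.sum_sub_distrib, hz] at h1
      simp only [Finset.sum_const, Finset.card_univ, Fintype.card_fin, nsmul_eq_mul, sub_zero] at h1
      rw [abs_mul, abs_of_pos hn0] at h1
      have := abs_le.mp (le_of_mul_le_mul_left h1 hn0)
      linarith [this.1, this.2]
  have hV : ∑ i, z i ^ 2 ≤ n * S ^ 2 := by
    have := Finset.sum_le_sum fun i (_ : i ∈ Finset.univ) => hzi i
    simpa using this
  set V := ∑ i, z i ^ 2 with hVdef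
  have hV0 : 0 ≤ V := Finset.sum_nonneg fun i _ => sq_nonneg _
  have hmain : ρ / (2 * (n : ℝ) ^ 2) * V ≤ ∑ i, W i := by
    have : V ≤ 2 * (n : ℝ) ^ 2 / ρ * ∑ i, W i := by
      calc V ≤ n * S ^ 2 := hV
        _ ≤ n * (n * (2 / ρ * ∑ i, W i)) := by gcongr
        _ = _ := by ring
    calc _ ≤ ρ / (2 * (n : ℝ) ^ 2) * (2 * (n : ℝ) ^ 2 / ρ * ∑ i, W i) := by gcongr
      _ = _ := by field_simp
  have e : (1 - ρ / (4 * (n : ℝ) ^ 2)) ^ 2 =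
      1 - ρ / (2 * (n : ℝ) ^ 2) + (ρ / (4 * (n : ℝ) ^ 2)) ^ 2 := by
    field_simp; ring
  rw [e]
  change ∑ i, y i ^ 2 ≤ _
  nlinarith [mul_nonneg (sq_nonneg (ρ / (4 * (n : ℝ) ^ 2))) hV0]

/-- Linear convergence of products of doubly stochastic matrices conforming to a
connected graph (with self-loops) to the averaging matrix. -/
theorem stmt_7 (n : ℕ) (hn : 1 ≤ n)
    (G : SimpleGraph (Fin n)) (hG : G.Connected)
    (ρ : ℝ) (hρ : 0 < ρ)
    (B : ℕ → Matrix (Fin n) (Fin n) ℝ)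
    (hBpos : ∀ k i j, 1 ≤ k → (G.Adj i j ∨ i = j) → ρ ≤ B k i j)
    (hBzero : ∀ k i j, 1 ≤ k → ¬(G.Adj i j ∨ i = j) → B k i j = 0)
    (hBnn : ∀ k i j, 1 ≤ k → 0 ≤ B k i j)
    (hBrow : ∀ k i, 1 ≤ k → ∑ j, B k i j = 1)
    (hBcol : ∀ k j, 1 ≤ k → ∑ i, B k i j = 1)
    (Φ : ℕ → ℕ → Matrix (Fin n) (Fin n) ℝ)
    (hΦdiag : ∀ s, 1 ≤ s → Φ s s = B s)
    (hΦrec : ∀ k s, 1 ≤ s → s ≤ k → Φ (k + 1) s = B (k + 1) * Φ k s) :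
    (∀ s, 1 ≤ s → Filter.Tendsto (fun k => Φ k s) Filter.atTop
      (nhds (Matrix.of fun _ _ => (1 : ℝ) / n))) ∧
    (∀ k s i j, 1 ≤ s → s ≤ k →
      |Φ k s i j - 1 / n| ≤
        (1 - ρ / (4 * (n : ℝ) ^ 2))⁻¹ ^ 2 * (1 - ρ / (4 * (n : ℝ) ^ 2)) ^ (k - s + 1)) := by
  have hn0 : (0 : ℝ) < n := by exact_mod_cast hn
  have hn1 : (1 : ℝ) ≤ n := by exact_mod_cast hn
  set b : ℝ := 1 - ρ / (4 * (n : ℝ) ^ 2) with hb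
  have hρ1 : ρ ≤ 1 := by
    let i : Fin n := ⟨0, hn⟩
    calc ρ ≤ B 1 i i := hBpos 1 i i le_rfl (Or.inr rfl)
      _ ≤ ∑ j, B 1 i j := Finset.single_le_sum (f := fun j => B 1 i j)
          (fun j _ => hBnn 1 i j le_rfl) (Finset.mem_univ i)
      _ = 1 := hBrow 1 i le_rfl
  have hq : ρ / (4 * (n : ℝ) ^ 2) < 1 := by
    rw [div_lt_one (by positivity)]
    nlinarith
  have hq0 : 0 < ρ / (4 * (n : ℝ) ^ 2) := by positivity
  have hb0 : 0 < b := by linarith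
  have hb1 : b < 1 := by linarith
  have key : ∀ s j, 1 ≤ s → ∀ m, ∑ i, (Φ (s + m) s i j - 1 / n) = 0 ∧
      ∑ i, (Φ (s + m) s i j - 1 / n) ^ 2 ≤ (b ^ 2) ^ (m + 1) := by
    intro s j hs m
    have gen : ∀ k, 1 ≤ k → ∀ z : Fin n → ℝ, ∑ i, z i = 0 →
        ∑ i, (∑ l, B k i l * z l) = 0 ∧
        ∑ i, (∑ l, B k i l * z l) ^ 2 ≤ b ^ 2 * ∑ i, z i ^ 2 := by
      intro k hk z hz
      refine ⟨?_, step_bound hn G hG ρ hρ (B k) (fun i j => hBpos k i j hk)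
        (fun i j => hBnn k i j hk) (fun i => hBrow k i hk) (fun i => hBcol k i hk) z hz⟩
      rw [Finset.sum_comm]
      simp only [← Finset.sum_mul, hBcol k _ hk, one_mul, hz]
    have sub : ∀ k, 1 ≤ k → ∀ w : Fin n → ℝ, ∀ i,
        ∑ l, B k i l * (w l - 1 / n) = ∑ l, B k i l * w l - 1 / n := by
      intro k hk w i
      simp only [mul_sub, Finset.sum_sub_distrib, ← Finset.sum_mul, hBrow k i hk, one_mul]
    induction m with
    | zero =>
      have hz : ∑ l, ((if l = j then (1 : ℝ) else 0) - 1 / n) = 0 := by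
        simp [Finset.sum_sub_distrib, hn0.ne']
      have hz2 : ∑ l, ((if l = j then (1 : ℝ) else 0) - 1 / n) ^ 2 ≤ 1 := by
        have : ∀ l, ((if l = j then (1 : ℝ) else 0) - 1 / n) ^ 2
            = (if l = j then (1 : ℝ) else 0) * (1 - 2 / n) + (1 / n) ^ 2 := by
          intro l; split_ifs <;> ring
        simp only [this, Finset.sum_add_distrib, ← Finset.sum_mul]
        simp only [Finset.sum_ite_eq', Finset.mem_univ, if_true, Finset.sum_const,
          Finset.card_univ, Fintype.card_fin, nsmul_eq_mul]
        have : (n : ℝ) * (1 / n) ^ 2 = 1 / n := by field_simp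
        have h2 : (0 : ℝ) < 1 / n := by positivity
        have h3 : (2 : ℝ) / n = 2 * (1 / n) := by ring
        rw [this, h3]; linarith
      have h := gen s hs _ hz
      have e : ∀ i, ∑ l, B s i l * ((if l = j then (1 : ℝ) else 0) - 1 / n)
          = Φ (s + 0) s i j - 1 / n := by
        intro i
        rw [sub s hs]
        simp [hΦdiag s hs]
      simp only [e] at h
      refine ⟨h.1, h.2.trans ?_⟩
      nlinarith [sq_nonneg b]
    | succ m ih =>
      have h := gen (s + m + 1) (by omega) _ ih.1
      have e : ∀ i, ∑ l, B (s + m + 1) i l * (Φ (s + m) s l j - 1 / n)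
          = Φ (s + (m + 1)) s i j - 1 / n := by
        intro i
        rw [sub (s + m + 1) (by omega), ← add_assoc, hΦrec (s + m) s hs (by omega),
          Matrix.mul_apply]
      simp only [e] at h
      refine ⟨h.1, h.2.trans ?_⟩
      rw [pow_succ' _ (m + 1)]
      exact mul_le_mul_of_nonneg_left ih.2 (sq_nonneg b)
  have bound : ∀ k s i j, 1 ≤ s → s ≤ k → |Φ k s i j - 1 / n| ≤ b ^ (k - s + 1) := by
    intro k s i j hs hk
    obtain ⟨m, rfl⟩ := Nat.exists_eq_add_of_le hk
    have h := (key s j hs m).2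
    have h1 : (Φ (s + m) s i j - 1 / n) ^ 2 ≤ (b ^ (m + 1)) ^ 2 := by
      refine le_trans ?_ (h.trans_eq (by ring))
      exact Finset.single_le_sum (f := fun i => (Φ (s + m) s i j - 1 / n) ^ 2)
        (fun i _ => sq_nonneg _) (Finset.mem_univ i)
    rw [Nat.add_sub_cancel_left]
    exact abs_le_of_sq_le_sq h1 (by positivity)
  refine ⟨?_, ?_⟩
  · intro s hs
    refine tendsto_pi_nhds.2 fun i => tendsto_pi_nhds.2 fun j => ?_
    rw [tendsto_iff_dist_tendsto_zero]
    have ht : Filter.Tendsto (fun k => b ^ (k - s + 1)) Filter.atTop (nhds 0) :=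
      (tendsto_pow_atTop_nhds_zero_of_lt_one hb0.le hb1).comp
        ((Filter.tendsto_add_atTop_nat 1).comp (Filter.tendsto_sub_atTop_nat s))
    refine squeeze_zero' (Filter.Eventually.of_forall fun _ => dist_nonneg) ?_ ht
    filter_upwards [Filter.eventually_ge_atTop s] with k hk
    rw [Real.dist_eq]
    exact bound k s i j hs hk
  · intro k s i j hs hk
    refine (bound k s i j hs hk).trans ?_
    exact le_mul_of_one_le_left (by positivity) (one_le_pow₀ ((one_le_inv₀ hb0).2 hb1.le))
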